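/- If N = [[A,B],[C,D]] is a J-unitary operator on K and U is a unitary operator on H, then CU + D is invertible and the Möbius transform (AU + B)(CU + D)⁻¹ is a unitary operator on H. -/

import Mathlib

open ContinuousLinearMap

noncomputable section

variable {H : Type*} [NormedAddCommGroup H] [InnerProductSpace ℂ H] [CompleteSpace H]

/-- The Hilbert space `K = H ⊕ H` (with the `ℓ²` product norm). -/
abbrev Kspace (H : Type*) [NormedAddCommGroup H] [InnerProductSpace ℂ H] : Type _ :=
  WithLp 2 (H × H)

/-- The block operator `[[A,B],[C,D]]` on `K`, acting by `(x,y) ↦ (Ax + By, Cx + Dy)`. -/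
def blockOp (A B C D : H →L[ℂ] H) : Kspace H →L[ℂ] Kspace H :=
  (((WithLp.prodContinuousLinearEquiv 2 ℂ H H).symm : (H × H) →L[ℂ] Kspace H)) ∘L
    (((A ∘L ContinuousLinearMap.fst ℂ H H) + (B ∘L ContinuousLinearMap.snd ℂ H H)).prod
      ((C ∘L ContinuousLinearMap.fst ℂ H H) + (D ∘L ContinuousLinearMap.snd ℂ H H))) ∘L
    (((WithLp.prodContinuousLinearEquiv 2 ℂ H H) : Kspace H →L[ℂ] H × H))

/-- The fundamental symmetry `J = [[1,0],[0,-1]]`. -/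
def Jop (H : Type*) [NormedAddCommGroup H] [InnerProductSpace ℂ H] [CompleteSpace H] :
    Kspace H →L[ℂ] Kspace H :=
  blockOp 1 0 0 (-1)

theorem blockOp_mul' (A B C D A' B' C' D' : H →L[ℂ] H) :
    blockOp A B C D * blockOp A' B' C' D' =
      blockOp (A * A' + B * C') (A * B' + B * D') (C * A' + D * C') (C * B' + D * D') := by
  ext x
  simp [blockOp]
  constructor <;> abel

theorem blockOp_adj' (A B C D : H →L[ℂ] H) :
    adjoint (blockOp A B C D) = blockOp (star A) (star C) (star B) (star D) := by
  symm
  rw [ContinuousLinearMap.eq_adjoint_iff]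
  intro x y
  simp [blockOp, WithLp.prod_inner_apply, inner_add_left, inner_add_right,
    ContinuousLinearMap.star_eq_adjoint, ContinuousLinearMap.adjoint_inner_left]
  abel

theorem blockOp_inj' {A B C D A' B' C' D' : H →L[ℂ] H}
    (h : blockOp A B C D = blockOp A' B' C' D') : A = A' ∧ B = B' ∧ C = C' ∧ D = D' := by
  refine ⟨?_, ?_, ?_, ?_⟩ <;> ext x
  · simpa [blockOp] using congrArg (fun T => (T (WithLp.toLp 2 (x, 0))).fst) h
  · simpa [blockOp] using congrArg (fun T => (T (WithLp.toLp 2 (0, x))).fst) h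
  · simpa [blockOp] using congrArg (fun T => (T (WithLp.toLp 2 (x, 0))).snd) h
  · simpa [blockOp] using congrArg (fun T => (T (WithLp.toLp 2 (0, x))).snd) h

theorem blockOp_one' : blockOp (1 : H →L[ℂ] H) 0 0 1 = 1 := by
  ext x
  simp [blockOp]
  rfl

/-- `1 + T` is invertible for skew-adjoint `T`. -/
theorem isUnit_one_add_skew' (T : H →L[ℂ] H) (hT : star T = -T) : IsUnit (1 + T) := by
  have hs : IsSelfAdjoint (Complex.I • T) := by
    rw [isSelfAdjoint_iff, star_smul, hT]
    simp
  have h : -Complex.I ∉ spectrum ℂ (Complex.I • T) := by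
    intro h
    have := hs.im_eq_zero_of_mem_spectrum h
    simp at this
  rw [spectrum.notMem_iff] at h
  have h2 : (1 + T) = (Complex.I) • (algebraMap ℂ (H →L[ℂ] H) (-Complex.I) - Complex.I • T) := by
    rw [Algebra.algebraMap_eq_smul_one, smul_sub, smul_smul, smul_smul]
    simp
  rw [h2]
  have := h.smul (Units.mk0 Complex.I Complex.I_ne_zero)
  exact this

/-- If `N = [[A,B],[C,D]]` is `J`-unitary and `U` is unitary on `H`, then `CU + D` is
invertible and the Möbius transform `(AU + B)(CU + D)⁻¹` is unitary. -/
theorem moebius_of_J_unitary (A B C D U : H →L[ℂ] H)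
    (hNinv : IsUnit (blockOp A B C D))
    (hNJ : adjoint (blockOp A B C D) ∘L Jop H ∘L blockOp A B C D = Jop H)
    (hU : U ∈ unitary (H →L[ℂ] H)) :
    ∃ W : H →L[ℂ] H, (C ∘L U + D) ∘L W = 1 ∧ W ∘L (C ∘L U + D) = 1 ∧
      (A ∘L U + B) ∘L W ∈ unitary (H →L[ℂ] H) := by
  have hJJ : Jop H * Jop H = 1 := by
    simp [Jop, blockOp_mul', blockOp_one']
  have hNJ' : adjoint (blockOp A B C D) * (Jop H * blockOp A B C D) = Jop H := hNJ
  have hL : (Jop H * adjoint (blockOp A B C D) * Jop H) * blockOp A B C D = 1 := by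
    rw [mul_assoc, mul_assoc, hNJ', hJJ]
  have hR : blockOp A B C D * (Jop H * adjoint (blockOp A B C D) * Jop H) = 1 := by
    obtain ⟨u, hu⟩ := hNinv
    rw [← hu] at hL ⊢
    rw [left_inv_eq_right_inv hL (Units.mul_inv u), Units.mul_inv]
  rw [blockOp_adj', Jop, blockOp_mul', blockOp_mul', blockOp_mul', ← blockOp_one'] at hL hR
  obtain ⟨l1, l2, l3, l4⟩ := blockOp_inj' hL
  obtain ⟨r1, r2, r3, r4⟩ := blockOp_inj' hR
  simp only [one_mul, mul_one, zero_mul, mul_zero, add_zero, zero_add, neg_mul, mul_neg, neg_neg]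
    at l1 l2 l3 l4 r1 r2 r3 r4
  have hU1 : star U * U = 1 := (Unitary.mem_iff.1 hU).1
  have hU2 : U * star U = 1 := (Unitary.mem_iff.1 hU).2
  -- right inverses
  have hQ : ∃ W, (C * U + D) * W = 1 := by
    have e : (C * U + D) * star (D - C * U) = 1 + (C * U * star D - D * star U * star C) := by
      have h : C * U * (star U * star C) = C * star C := by
        rw [mul_assoc, ← mul_assoc U, hU2, one_mul]
      rw [← r4]
      simp only [star_sub, star_mul, add_mul, mul_sub, ← mul_assoc] at *
      rw [h]; abel
    obtain ⟨v, hv⟩ := isUnit_one_add_skew' (C * U * star D - D * star U * star C)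
      (by simp [mul_assoc])
    refine ⟨star (D - C * U) * ↑v⁻¹, ?_⟩
    rw [← mul_assoc, e, ← hv, Units.mul_inv]
  have hP : ∃ S, (A * U + B) * S = 1 := by
    have e : (A * U + B) * star (A * U - B) = 1 + (B * star U * star A - A * U * star B) := by
      have h : A * U * (star U * star A) = A * star A := by
        rw [mul_assoc, ← mul_assoc U, hU2, one_mul]
      rw [← r1]
      simp only [star_sub, star_mul, add_mul, mul_sub, ← mul_assoc] at *
      rw [h]; abel
    obtain ⟨v, hv⟩ := isUnit_one_add_skew' (B * star U * star A - A * U * star B)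
      (by simp [mul_assoc])
    refine ⟨star (A * U - B) * ↑v⁻¹, ?_⟩
    rw [← mul_assoc, e, ← hv, Units.mul_inv]
  have k1 : star A * (A * U + B) - star C * (C * U + D) = U := by
    have : star A * (A * U + B) - star C * (C * U + D) =
      (star A * A + -(star C * C)) * U + (star A * B + -(star C * D)) := by noncomm_ring
    rw [this, l1, l2]; simp
  have k2 : star D * (C * U + D) - star B * (A * U + B) = 1 := by
    have : star D * (C * U + D) - star B * (A * U + B) =
      (-(star B * A) + star D * C) * U + (-(star B * B) + star D * D) := by noncomm_ring
    rw [this, l3, l4]; simp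
  have hPQ : star (A * U + B) * (A * U + B) = star (C * U + D) * (C * U + D) := by
    have : star (A * U + B) * (A * U + B) - star (C * U + D) * (C * U + D) =
      star U * (star A * (A * U + B) - star C * (C * U + D))
        - (star D * (C * U + D) - star B * (A * U + B)) := by
      simp only [star_add, star_mul]; noncomm_ring
    rw [k1, k2, hU1, sub_self] at this
    exact sub_eq_zero.1 this
  generalize A * U + B = P at *
  obtain ⟨W, hW⟩ := hQ
  obtain ⟨S, hS⟩ := hP
  have hP0 : P * (W * (C * U + D) - 1) = 0 := by
    have h0 : (C * U + D) * (W * (C * U + D) - 1) = 0 := by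
      rw [mul_sub, ← mul_assoc, hW]; simp
    rw [← CStarRing.star_mul_self_eq_zero_iff, star_mul, mul_assoc, ← mul_assoc (star P), hPQ,
      mul_assoc, h0]
    simp
  have hWl : W * (C * U + D) = 1 := by
    have h0 : (C * U + D) * (W * (C * U + D) - 1) = 0 := by
      rw [mul_sub, ← mul_assoc, hW]; simp
    have h1 := congrArg (· * (W * (C * U + D) - 1)) k2
    simp only [sub_mul, mul_assoc, one_mul] at h1
    rw [h0, hP0] at h1
    simpa using (sub_eq_zero.1 (by simpa using h1.symm))
  refine ⟨W, hW, hWl, ?_⟩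
  change P * W ∈ _
  generalize C * U + D = Q at *
  have v1 : star (P * W) * (P * W) = 1 := by
    rw [star_mul, mul_assoc, ← mul_assoc (star P), hPQ, mul_assoc, hW, mul_one, ← star_mul, hW,
      star_one]
  have v2 : (P * W) * (Q * S) = 1 := by
    rw [mul_assoc, ← mul_assoc W, hWl, one_mul, hS]
  refine Unitary.mem_iff.2 ⟨v1, ?_⟩
  rw [left_inv_eq_right_inv v1 v2, v2]
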